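/- arXiv:2410.09122 — 2 statements merged into one kernel-verified Lean document; each statement's English description precedes it below -/
import Mathlib

section
/- Let Q be a finite simple graph with n vertices and m edges. Then the first Zagreb index of the transformation graph Q_{rs}^{+−+} (the case p = r, q = 0 of Q_{rs}^{x(p) y(q) +}) equals (r(s+1)² − 2s(m+2r+1))·M1(Q) + 2s·M2(Q) + s·F(Q) + ms(m+2r+1)². -/
/-- Classical `Fintype` instance for neighbor sets of graphs on finite types. -/
noncomputable instance fintypeNeighborSetOfFinite {W : Type*} [Finite W]
    (G : SimpleGraph W) (v : W) : Fintype (G.neighborSet v) :=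
  Fintype.ofFinite _

/-- Classical `Fintype` instance for the edge set of a graph on a finite type. -/
noncomputable instance fintypeEdgeSetOfFinite {W : Type*} [Finite W]
    (G : SimpleGraph W) : Fintype G.edgeSet :=
  Fintype.ofFinite _

/-- The first Zagreb index `M₁(G) = Σ_v d(v)²`. -/
noncomputable def zagrebM1 {W : Type*} [Fintype W] (G : SimpleGraph W) : ℕ :=
  ∑ v, G.degree v ^ 2

/-- The second Zagreb index `M₂(G) = Σ_{uv ∈ E(G)} d(u)·d(v)`. -/
noncomputable def zagrebM2 {W : Type*} [Fintype W] (G : SimpleGraph W) : ℕ :=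
  ∑ e ∈ G.edgeFinset,
    Sym2.lift ⟨fun u v => G.degree u * G.degree v, fun u v => Nat.mul_comm (G.degree u) (G.degree v)⟩ e

/-- The forgotten index `F(G) = Σ_v d(v)³`. -/
noncomputable def forgottenF {W : Type*} [Fintype W] (G : SimpleGraph W) : ℕ :=
  ∑ v, G.degree v ^ 3

/-- The `(r,s)`-generalised transformation graph `Q_{rs}^{x(p) y(q) +}`.
Its vertices are `r` copies of `V(Q)` (indexed by `Fin r`) together with `s`
copies of `E(Q)` (indexed by `Fin s`).  The copy `V_g` carries the adjacency of
`Q` when `g < p` and that of the complement when `g ≥ p`; the copy `E_h`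
carries line-graph adjacency (sharing an endpoint) when `h < q` and its
complement when `h ≥ q`; a vertex-copy vertex and an edge-copy vertex are
adjacent iff the vertex is incident with the edge in `Q`. -/
def genTransPlus {V : Type*} (Q : SimpleGraph V) (r s p q : ℕ) :
    SimpleGraph ((Fin r × V) ⊕ (Fin s × Q.edgeSet)) :=
  SimpleGraph.fromRel (fun a b =>
    match a, b with
    | Sum.inl (g, α), Sum.inl (g', β) =>
        g = g' ∧ (((g : ℕ) < p ∧ Q.Adj α β) ∨ (¬ (g : ℕ) < p ∧ ¬ Q.Adj α β))
    | Sum.inr (h, e), Sum.inr (h', f) =>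
        h = h' ∧ (((h : ℕ) < q ∧ ∃ w, w ∈ (e : Sym2 V) ∧ w ∈ (f : Sym2 V)) ∨
                  (¬ (h : ℕ) < q ∧ ¬ ∃ w, w ∈ (e : Sym2 V) ∧ w ∈ (f : Sym2 V)))
    | Sum.inl (_, α), Sum.inr (_, e) => α ∈ (e : Sym2 V)
    | Sum.inr (_, e), Sum.inl (_, α) => α ∈ (e : Sym2 V))

open Classical in
/-- Degree as a sum of indicators. -/
theorem degree_eq_sum_ind {W : Type*} [Fintype W] (G : SimpleGraph W) (v : W) :
    (G.degree v : ℤ) = ∑ w, if G.Adj v w then (1 : ℤ) else 0 := by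
  rw [Finset.sum_boole, SimpleGraph.degree]
  congr 2
  ext w
  simp

open Classical in
theorem sum_edge_ind {V : Type*} [Fintype V] (Q : SimpleGraph V) (v : V) :
    (∑ e : Q.edgeSet, if v ∈ (e : Sym2 V) then (1 : ℤ) else 0) = Q.degree v := by
  rw [Finset.sum_boole, SimpleGraph.degree]
  congr 1
  symm
  refine Finset.card_bij (fun w hw => ⟨s(v, w), by simpa using hw⟩) ?_ ?_ ?_
  · intro w hw
    simp
  · intro a ha b hb h
    have h' : a = b ∨ v = b ∧ a = v := by simpa using h
    grind
  · rintro ⟨e, he⟩ h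
    have h' : v ∈ e := by simpa using h
    obtain ⟨w, rfl⟩ := h'
    exact ⟨w, by simpa using he, rfl⟩

open Classical in
theorem sum_ends {V : Type*} [Fintype V] (f : V → ℤ) (u v : V) (huv : u ≠ v) :
    (∑ w, if w ∈ s(u, v) then f w else 0) = f u + f v := by
  rw [← Finset.sum_filter, ← Finset.sum_pair huv]
  congr 1
  ext w
  simp

open Classical in
theorem share_ind {V : Type*} [Fintype V] (Q : SimpleGraph V) (e f : Q.edgeSet) :
    (if ∃ w, w ∈ (e : Sym2 V) ∧ w ∈ (f : Sym2 V) then (1 : ℤ) else 0) =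
      (∑ w, if w ∈ (e : Sym2 V) then (if w ∈ (f : Sym2 V) then (1 : ℤ) else 0) else 0)
        - if f = e then 1 else 0 := by
  obtain ⟨e, he⟩ := e
  obtain ⟨f, hf⟩ := f
  induction e using Sym2.ind with
  | _ u v =>
  induction f using Sym2.ind with
  | _ x y =>
  have h1 : u ≠ v := Q.ne_of_adj (by simpa using he)
  have h2 : x ≠ y := Q.ne_of_adj (by simpa using hf)
  simp only [sum_ends _ u v h1, Subtype.mk.injEq]
  have : (∃ w, w ∈ s(u, v) ∧ w ∈ s(x, y)) ↔ (u ∈ s(x, y) ∨ v ∈ s(x, y)) := by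
    constructor
    · rintro ⟨w, hw, h⟩
      rcases Sym2.mem_iff.1 hw with rfl | rfl <;> simp [h]
    · rintro (h | h)
      · exact ⟨u, by simp, h⟩
      · exact ⟨v, by simp, h⟩
  have h3 : s(x, y) = s(u, v) ↔ (u ∈ s(x, y) ∧ v ∈ s(x, y)) := by
    simp only [Sym2.mem_iff, Sym2.eq_iff]
    grind
  simp only [this, h3]
  by_cases ha : u ∈ s(x, y) <;> by_cases hb : v ∈ s(x, y) <;> simp [ha, hb]

open Classical in
/-- Sum of the degrees of the ends of an edge. -/
noncomputable def endSum {V : Type*} [Fintype V] (Q : SimpleGraph V) (e : Sym2 V) : ℤ :=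
  ∑ w, if w ∈ e then (Q.degree w : ℤ) else 0

open Classical in
theorem sum_edges_ends {V : Type*} [Fintype V] (Q : SimpleGraph V) (f : V → ℤ) :
    (∑ e : Q.edgeSet, ∑ w, if w ∈ (e : Sym2 V) then f w else 0) = ∑ w, f w * Q.degree w := by
  rw [Finset.sum_comm]
  refine Finset.sum_congr rfl fun w _ => ?_
  rw [← sum_edge_ind, Finset.mul_sum]
  simp

open Classical in
theorem sum_share {V : Type*} [Fintype V] (Q : SimpleGraph V) (e : Q.edgeSet) :
    (∑ f : Q.edgeSet, if ∃ w, w ∈ (e : Sym2 V) ∧ w ∈ (f : Sym2 V) then (1 : ℤ) else 0) =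
      endSum Q e - 1 := by
  simp only [share_ind, Finset.sum_sub_distrib]
  rw [Finset.sum_comm]
  congr 1
  · unfold endSum
    refine Finset.sum_congr rfl fun w _ => ?_
    split_ifs
    · rw [sum_edge_ind]
    · simp
  · simp

theorem degree_inl {V : Type*} [Fintype V] (Q : SimpleGraph V) (r s : ℕ) (g : Fin r) (v : V) :
    ((genTransPlus Q r s r 0).degree (Sum.inl (g, v)) : ℤ) = (s + 1) * Q.degree v := by
  classical
  rw [degree_eq_sum_ind, Fintype.sum_sum_type, Fintype.sum_prod_type, Fintype.sum_prod_type]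
  have h1 : ∀ g' w, (genTransPlus Q r s r 0).Adj (Sum.inl (g, v)) (Sum.inl (g', w)) ↔
      (g = g' ∧ Q.Adj v w) := by
    intro g' w
    simp only [genTransPlus, SimpleGraph.fromRel_adj]
    have := g.2
    have := g'.2
    have h3 := Q.adj_comm v w
    have h4 : Q.Adj v w → v ≠ w := Q.ne_of_adj
    simp only [ne_eq, Sum.inl.injEq, Prod.mk.injEq]
    grind
  have h2 : ∀ h (e : Q.edgeSet), (genTransPlus Q r s r 0).Adj (Sum.inl (g, v)) (Sum.inr (h, e)) ↔
      v ∈ (e : Sym2 V) := by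
    intro h e
    simp [genTransPlus, SimpleGraph.fromRel_adj]
  simp only [h1, h2, sum_edge_ind]
  have h5 : ∀ g', (∑ w, if g = g' ∧ Q.Adj v w then (1 : ℤ) else 0) =
      if g = g' then (Q.degree v : ℤ) else 0 := by
    intro g'
    by_cases h : g = g' <;> simp only [h, true_and, false_and, if_true, if_false]
    · rw [degree_eq_sum_ind]
    · simp
  simp only [h5]
  simp
  ring

theorem degree_inr {V : Type*} [Fintype V] (Q : SimpleGraph V) (r s : ℕ) (h : Fin s)
    (e : Q.edgeSet) :
    ((genTransPlus Q r s r 0).degree (Sum.inr (h, e)) : ℤ) =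
      (Fintype.card Q.edgeSet : ℤ) + 2 * r + 1 - endSum Q e := by
  classical
  rw [degree_eq_sum_ind, Fintype.sum_sum_type, Fintype.sum_prod_type, Fintype.sum_prod_type]
  have h1 : ∀ (h' : Fin s) (f : Q.edgeSet),
      (genTransPlus Q r s r 0).Adj (Sum.inr (h, e)) (Sum.inr (h', f)) ↔
      (h = h' ∧ ¬ ∃ w, w ∈ (e : Sym2 V) ∧ w ∈ (f : Sym2 V)) := by
    intro h' f
    have hc : (∃ w, w ∈ (f : Sym2 V) ∧ w ∈ (e : Sym2 V)) ↔
      ∃ w, w ∈ (e : Sym2 V) ∧ w ∈ (f : Sym2 V) := by simp only [and_comm]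
    have hd : e = f → ∃ w, w ∈ (e : Sym2 V) ∧ w ∈ (f : Sym2 V) := by
      rintro rfl
      exact ⟨_, Sym2.out_fst_mem _, Sym2.out_fst_mem _⟩
    simp only [genTransPlus, SimpleGraph.fromRel_adj, hc]
    generalize (∃ w, w ∈ (e : Sym2 V) ∧ w ∈ (f : Sym2 V)) = P at *
    simp only [ne_eq, Sum.inr.injEq, Prod.mk.injEq]
    grind
  have h2 : ∀ (g : Fin r) (v : V),
      (genTransPlus Q r s r 0).Adj (Sum.inr (h, e)) (Sum.inl (g, v)) ↔
      v ∈ (e : Sym2 V) := by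
    intro h e
    simp [genTransPlus, SimpleGraph.fromRel_adj]
  simp only [h1, h2]
  have h5 : ∀ h' : Fin s, (∑ f : Q.edgeSet,
      if h = h' ∧ ¬ ∃ w, w ∈ (e : Sym2 V) ∧ w ∈ (f : Sym2 V) then (1 : ℤ) else 0) =
      if h = h' then (Fintype.card Q.edgeSet : ℤ) - (endSum Q e - 1) else 0 := by
    intro h'
    by_cases h : h = h' <;> simp only [h, true_and, false_and, if_true, if_false]
    · rw [← sum_share, eq_sub_iff_add_eq, ← Finset.sum_add_distrib]
      trans ∑ _f : Q.edgeSet, (1 : ℤ)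
      · refine Finset.sum_congr rfl fun f _ => ?_
        by_cases hP : ∃ w, w ∈ (e : Sym2 V) ∧ w ∈ (f : Sym2 V)
        · rw [if_neg (not_not.2 hP), if_pos hP]; rfl
        · rw [if_pos hP, if_neg hP]; rfl
      · simp
    · simp
  have h6 : (∑ w, if w ∈ (e : Sym2 V) then (1 : ℤ) else 0) = 2 := by
    obtain ⟨e, he⟩ := e
    induction e using Sym2.ind with
    | _ u v => exact sum_ends (fun _ => 1) u v (Q.ne_of_adj (by simpa using he))
  simp only [h5, h6]
  simp
  ring

theorem sum_endSum {V : Type*} [Fintype V] (Q : SimpleGraph V) :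
    (∑ e : Q.edgeSet, endSum Q e) = zagrebM1 Q := by
  simp only [endSum, sum_edges_ends, zagrebM1]
  push_cast
  exact Finset.sum_congr rfl fun w _ => by ring

theorem sum_endSum_sq {V : Type*} [Fintype V] (Q : SimpleGraph V) :
    (∑ e : Q.edgeSet, endSum Q e ^ 2) = forgottenF Q + 2 * zagrebM2 Q := by
  classical
  have hF : (forgottenF Q : ℤ) =
      ∑ e : Q.edgeSet, ∑ w, if w ∈ (e : Sym2 V) then (Q.degree w : ℤ) ^ 2 else 0 := by
    rw [sum_edges_ends, forgottenF]
    push_cast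
    exact Finset.sum_congr rfl fun w _ => by ring
  have hM : zagrebM2 Q = ∑ e : Q.edgeSet,
      Sym2.lift ⟨fun u v => Q.degree u * Q.degree v,
        fun u v => Nat.mul_comm (Q.degree u) (Q.degree v)⟩ (e : Sym2 V) := by
    rw [zagrebM2]
    exact Finset.sum_subtype _ (fun x => by simp) _
  rw [hF, hM]
  push_cast
  rw [Finset.mul_sum, ← Finset.sum_add_distrib]
  refine Finset.sum_congr rfl fun e _ => ?_
  obtain ⟨e, he⟩ := e
  induction e using Sym2.ind with
  | _ u v =>
    have huv : u ≠ v := Q.ne_of_adj (by simpa using he)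
    simp only [endSum, sum_ends _ u v huv, Sym2.lift_mk]
    push_cast
    ring

/-- First Zagreb index of `Q_{rs}^{+-+}`, i.e. the case `p = r`, `q = 0`. -/
theorem zagrebM1_genTransPlus_pmp
    {V : Type*} [Fintype V] (Q : SimpleGraph V)
    (r s n m : ℕ) (hr : 0 < r) (hs : 0 < s)
    (hn : Fintype.card V = n) (hm : Q.edgeFinset.card = m) :
    (zagrebM1 (genTransPlus Q r s r 0) : ℤ) =
      ((r : ℤ) * ((s : ℤ) + 1) ^ 2 - 2 * s * ((m : ℤ) + 2 * r + 1)) * zagrebM1 Q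
      + 2 * s * zagrebM2 Q + s * forgottenF Q
      + (m : ℤ) * s * ((m : ℤ) + 2 * r + 1) ^ 2 := by
  have hm' : (Fintype.card Q.edgeSet : ℤ) = m := by
    rw [← hm, SimpleGraph.edgeFinset_card]
  have key : (zagrebM1 (genTransPlus Q r s r 0) : ℤ) =
      r * ((s + 1) ^ 2 * zagrebM1 Q) +
      s * ∑ e : Q.edgeSet, ((m : ℤ) + 2 * r + 1 - endSum Q e) ^ 2 := by
    rw [zagrebM1]
    push_cast
    rw [Fintype.sum_sum_type, Fintype.sum_prod_type, Fintype.sum_prod_type]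
    simp only [degree_inl, degree_inr, hm', mul_pow, ← Finset.mul_sum, zagrebM1]
    simp
    ring
  rw [key]
  simp only [sub_sq, Finset.sum_add_distrib, Finset.sum_sub_distrib, ← Finset.mul_sum,
    sum_endSum, sum_endSum_sq]
  simp only [Finset.sum_const, Finset.card_univ, nsmul_eq_mul, hm']
  ring
end

section
/- Let Q be a finite simple graph with n vertices and m edges. Then the first Zagreb index of the transformation graph Q_{rs}^{+−−} (the case p = r, q = 0 of Q_{rs}^{x(p) y(q) −}) equals (r(1−s)² − 2s(m+r(n−2)+1))·M1(Q) + 2s·M2(Q) + s·F(Q) + nrm²s² + 4rsm²(1−s) + sm(m+r(n−2)+1)². -/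
/-- The `(r,s)`-generalised transformation graph `Q_{rs}^{x(p) y(q) -}`.
Its vertices are `r` copies of `V(Q)` (indexed by `Fin r`) together with `s`
copies of `E(Q)` (indexed by `Fin s`).  The copy `V_g` carries the adjacency of
`Q` when `g < p` and that of the complement when `g ≥ p`; the copy `E_h`
carries line-graph adjacency (sharing an endpoint) when `h < q` and its
complement when `h ≥ q`; a vertex-copy vertex and an edge-copy vertex are
adjacent iff the vertex is NOT incident with the edge in `Q`. -/
def genTransMinus {V : Type*} (Q : SimpleGraph V) (r s p q : ℕ) :
    SimpleGraph ((Fin r × V) ⊕ (Fin s × Q.edgeSet)) :=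
  SimpleGraph.fromRel (fun a b =>
    match a, b with
    | Sum.inl (g, α), Sum.inl (g', β) =>
        g = g' ∧ (((g : ℕ) < p ∧ Q.Adj α β) ∨ (¬ (g : ℕ) < p ∧ ¬ Q.Adj α β))
    | Sum.inr (h, e), Sum.inr (h', f) =>
        h = h' ∧ (((h : ℕ) < q ∧ ∃ w, w ∈ (e : Sym2 V) ∧ w ∈ (f : Sym2 V)) ∨
                  (¬ (h : ℕ) < q ∧ ¬ ∃ w, w ∈ (e : Sym2 V) ∧ w ∈ (f : Sym2 V)))
    | Sum.inl (_, α), Sum.inr (_, e) => α ∉ (e : Sym2 V)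
    | Sum.inr (_, e), Sum.inl (_, α) => α ∉ (e : Sym2 V))

open Classical in
theorem aux_deg {W : Type*} [Fintype W] (G : SimpleGraph W) (v : W) :
    (G.degree v : ℤ) = ∑ w, if G.Adj v w then 1 else 0 := by
  rw [Finset.sum_boole, ← SimpleGraph.card_neighborFinset_eq_degree]
  congr 2
  ext w
  simp

open Classical in
theorem aux_ends {V : Type*} [Fintype V] (u v : V) (h : u ≠ v) (f : V → ℤ) :
    ∑ a, (if a ∈ s(u, v) then f a else 0) = f u + f v := by
  rw [← Finset.sum_filter, ← Finset.sum_pair h]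
  congr 1
  ext a
  simp

open Classical in
theorem aux_inc {V : Type*} [Fintype V] (Q : SimpleGraph V) (a : V) :
    ∑ e : Q.edgeSet, (if a ∈ (e : Sym2 V) then (1 : ℤ) else 0) = Q.degree a := by
  have h1 : ∑ e : Q.edgeSet, (if a ∈ (e : Sym2 V) then (1 : ℤ) else 0)
      = ∑ e ∈ Q.edgeFinset, (if a ∈ e then (1 : ℤ) else 0) :=
    (Finset.sum_subtype Q.edgeFinset (fun x => by simp)
      (fun e : Sym2 V => if a ∈ e then (1 : ℤ) else 0)).symm
  rw [h1, Finset.sum_boole, ← SimpleGraph.card_incidenceFinset_eq_degree]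
  congr 2
  ext e
  simp [SimpleGraph.incidenceSet]

open Classical in
theorem aux_sum {V : Type*} [Fintype V] (Q : SimpleGraph V) (f : V → ℤ) :
    ∑ e : Q.edgeSet, ∑ a, (if a ∈ (e : Sym2 V) then f a else 0) = ∑ a, Q.degree a * f a := by
  rw [Finset.sum_comm]
  refine Finset.sum_congr rfl fun a _ => ?_
  rw [← aux_inc, Finset.sum_mul]
  refine Finset.sum_congr rfl fun e _ => ?_
  split_ifs <;> simp

theorem aux_card {V : Type*} [Fintype V] (Q : SimpleGraph V) :
    Fintype.card Q.edgeSet = Q.edgeFinset.card := by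
  rw [SimpleGraph.edgeFinset, Set.toFinset_card]

theorem aux_vdeg {V : Type*} [Fintype V] (Q : SimpleGraph V) (r s : ℕ) (g : Fin r) (a : V) :
    ((genTransMinus Q r s r 0).degree (Sum.inl (g, a)) : ℤ)
      = s * Q.edgeFinset.card + (1 - s) * Q.degree a := by
  classical
  have h1 : ∀ (g' : Fin r) (b : V), (genTransMinus Q r s r 0).Adj (Sum.inl (g, a)) (Sum.inl (g', b))
      ↔ g = g' ∧ Q.Adj a b := by
    intro g' b
    have := g.2
    have := g'.2
    simp only [genTransMinus, SimpleGraph.fromRel_adj]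
    constructor
    · rintro ⟨-, ⟨h, h'⟩ | ⟨h, h'⟩⟩
      · exact ⟨h, by tauto⟩
      · exact ⟨h.symm, by rw [Q.adj_comm]; tauto⟩
    · rintro ⟨rfl, h⟩
      refine ⟨?_, Or.inl ⟨rfl, by tauto⟩⟩
      intro hh
      simp at hh
      exact h.ne hh
  have h2 : ∀ (x : Fin s) (e : Q.edgeSet),
      (genTransMinus Q r s r 0).Adj (Sum.inl (g, a)) (Sum.inr (x, e)) ↔ a ∉ (e : Sym2 V) := by
    intro x e
    simp [genTransMinus, SimpleGraph.fromRel_adj]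
  rw [aux_deg, Fintype.sum_sum_type, Fintype.sum_prod_type, Fintype.sum_prod_type]
  simp only [h1, h2]
  have e1 : ∑ g' : Fin r, ∑ b, (if g = g' ∧ Q.Adj a b then (1 : ℤ) else 0) = Q.degree a := by
    rw [Finset.sum_eq_single g]
    · simp only [true_and]
      exact (aux_deg Q a).symm
    · intro b _ hb
      simp [hb.symm]
    · simp
  have e2 : ∑ e : Q.edgeSet, (if a ∉ (e : Sym2 V) then (1 : ℤ) else 0)
      = Q.edgeFinset.card - Q.degree a := by
    rw [← aux_inc, ← aux_card, eq_sub_iff_add_eq, ← Finset.sum_add_distrib]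
    rw [Finset.sum_congr rfl (g := fun _ => (1 : ℤ))]
    · simp
    · intro e _
      by_cases h : a ∈ (e : Sym2 V) <;> simp [h]
  rw [e1, e2]
  simp
  ring

theorem aux_edeg {V : Type*} [Fintype V] (Q : SimpleGraph V) (r s : ℕ) (x : Fin s)
    (u v : V) (huv : s(u, v) ∈ Q.edgeSet) :
    ((genTransMinus Q r s r 0).degree (Sum.inr (x, ⟨s(u, v), huv⟩)) : ℤ)
      = (Q.edgeFinset.card + r * ((Fintype.card V : ℤ) - 2) + 1) - (Q.degree u + Q.degree v) := by
  classical
  have hne : u ≠ v := SimpleGraph.Adj.ne huv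
  have h1 : ∀ (g' : Fin r) (b : V),
      (genTransMinus Q r s r 0).Adj (Sum.inr (x, ⟨s(u, v), huv⟩)) (Sum.inl (g', b))
      ↔ b ∉ s(u, v) := by
    intro g' b
    simp [genTransMinus, SimpleGraph.fromRel_adj]
  have h2 : ∀ (y : Fin s) (e : Q.edgeSet),
      (genTransMinus Q r s r 0).Adj (Sum.inr (x, ⟨s(u, v), huv⟩)) (Sum.inr (y, e)) ↔
        x = y ∧ (u ∉ (e : Sym2 V) ∧ v ∉ (e : Sym2 V)) := by
    rintro y ⟨e, he⟩
    simp only [genTransMinus, SimpleGraph.fromRel_adj]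
    constructor
    · rintro ⟨-, ⟨h, h'⟩ | ⟨h, h'⟩⟩
      · exact ⟨h, by simp at h'; tauto⟩
      · exact ⟨h.symm, by simp at h'; exact ⟨fun hu => (h' u hu).1 rfl, fun hu => (h' v hu).2 rfl⟩⟩
    · rintro ⟨rfl, hu, hv⟩
      refine ⟨?_, Or.inl ⟨rfl, by simp; tauto⟩⟩
      intro hh
      simp at hh
      subst hh
      simp at hu
  rw [aux_deg, Fintype.sum_sum_type, Fintype.sum_prod_type, Fintype.sum_prod_type]
  simp only [h1, h2]
  have e1 : ∑ b, (if b ∉ s(u, v) then (1 : ℤ) else 0) = Fintype.card V - 2 := by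
    have := aux_ends u v hne (fun _ => 1)
    rw [eq_sub_iff_add_eq, ← one_add_one_eq_two, ← this, ← Finset.sum_add_distrib]
    rw [Finset.sum_congr rfl (g := fun _ => (1 : ℤ))]
    · simp
    · intro b _
      by_cases h : b ∈ s(u, v) <;> simp only [h] <;> simp
  have e2 : ∑ y : Fin s, ∑ e : Q.edgeSet,
      (if x = y ∧ (u ∉ (e : Sym2 V) ∧ v ∉ (e : Sym2 V)) then (1 : ℤ) else 0)
      = Q.edgeFinset.card - Q.degree u - Q.degree v + 1 := by
    rw [Finset.sum_eq_single x]
    · have h3 : ∀ e : Q.edgeSet,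
          (if x = x ∧ (u ∉ (e : Sym2 V) ∧ v ∉ (e : Sym2 V)) then (1 : ℤ) else 0)
          = 1 - (if u ∈ (e : Sym2 V) then 1 else 0) - (if v ∈ (e : Sym2 V) then 1 else 0)
            + (if e = ⟨s(u, v), huv⟩ then 1 else 0) := by
        rintro ⟨e, he⟩
        have := Sym2.mem_and_mem_iff hne (z := e)
        simp only [Subtype.mk.injEq, ← this]
        by_cases hu : u ∈ e <;> by_cases hv : v ∈ e <;> simp [hu, hv]
      rw [Finset.sum_congr rfl fun e _ => h3 e]
      simp only [Finset.sum_add_distrib, Finset.sum_sub_distrib, aux_inc]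
      rw [← aux_card]
      simp
    · intro b _ hb
      simp [hb.symm]
    · simp
  rw [e1, e2]
  simp
  ring

theorem aux_m2 {V : Type*} [Fintype V] (Q : SimpleGraph V) :
    (zagrebM2 Q : ℤ) = ∑ e : Q.edgeSet, ((Sym2.lift ⟨fun u v => Q.degree u * Q.degree v,
      fun u v => Nat.mul_comm (Q.degree u) (Q.degree v)⟩ (e : Sym2 V) : ℕ) : ℤ) := by
  rw [zagrebM2, Nat.cast_sum]
  exact Finset.sum_subtype Q.edgeFinset (fun x => by simp) _

/-- First Zagreb index of `Q_{rs}^{+--}`, i.e. the case `p = r`, `q = 0`. -/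
theorem zagrebM1_genTransMinus_pmm
    {V : Type*} [Fintype V] (Q : SimpleGraph V)
    (r s n m : ℕ) (hr : 0 < r) (hs : 0 < s)
    (hn : Fintype.card V = n) (hm : Q.edgeFinset.card = m) :
    (zagrebM1 (genTransMinus Q r s r 0) : ℤ) =
      ((r : ℤ) * (1 - (s : ℤ)) ^ 2
          - 2 * s * ((m : ℤ) + (r : ℤ) * ((n : ℤ) - 2) + 1)) * zagrebM1 Q
      + 2 * s * zagrebM2 Q + s * forgottenF Q
      + (n : ℤ) * r * (m : ℤ) ^ 2 * (s : ℤ) ^ 2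
      + 4 * r * s * (m : ℤ) ^ 2 * (1 - (s : ℤ))
      + (s : ℤ) * m * ((m : ℤ) + (r : ℤ) * ((n : ℤ) - 2) + 1) ^ 2 := by
  classical
  subst hn hm
  rw [zagrebM1, Nat.cast_sum, Fintype.sum_sum_type, Fintype.sum_prod_type, Fintype.sum_prod_type]
  simp only [Nat.cast_pow, aux_vdeg]
  set A : ℤ := (Q.edgeFinset.card : ℤ) + r * ((Fintype.card V : ℤ) - 2) + 1 with hA
  have hE : ∀ (x : Fin s) (e : Q.edgeSet),
      ((genTransMinus Q r s r 0).degree (Sum.inr (x, e)) : ℤ) ^ 2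
      = A ^ 2 - 2 * A * (∑ a, if a ∈ (e : Sym2 V) then (Q.degree a : ℤ) else 0)
        + (∑ a, if a ∈ (e : Sym2 V) then (Q.degree a : ℤ) ^ 2 else 0)
        + 2 * ((Sym2.lift ⟨fun u v => Q.degree u * Q.degree v,
      fun u v => Nat.mul_comm (Q.degree u) (Q.degree v)⟩ (e : Sym2 V) : ℕ) : ℤ) := by
    rintro x ⟨e, he⟩
    induction e using Sym2.ind with
    | _ u v =>
      have hne : u ≠ v := SimpleGraph.Adj.ne he
      rw [aux_edeg]
      simp only [aux_ends u v hne (fun a => (Q.degree a : ℤ)),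
        aux_ends u v hne (fun a => (Q.degree a : ℤ) ^ 2), Sym2.lift_mk]
      push_cast
      ring
  have hh : ∑ a, (Q.degree a : ℤ) = 2 * Q.edgeFinset.card := by
    have := aux_sum Q (fun _ => 1)
    simp only [mul_one] at this
    rw [← this, ← aux_card, Finset.sum_congr rfl (g := fun _ => (2 : ℤ))]
    · simp
      ring
    · rintro ⟨e, he⟩ _
      induction e using Sym2.ind with
      | _ u v =>
        exact aux_ends u v (SimpleGraph.Adj.ne he) (fun _ => 1)
  have hM : ∑ a, (Q.degree a : ℤ) * Q.degree a = zagrebM1 Q := by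
    simp [zagrebM1, sq]
  have hF : ∑ a, (Q.degree a : ℤ) * (Q.degree a : ℤ) ^ 2 = forgottenF Q := by
    simp only [forgottenF, Nat.cast_sum, Nat.cast_pow]
    exact Finset.sum_congr rfl fun a _ => by ring
  have hV : ∑ a, ((s : ℤ) * Q.edgeFinset.card + (1 - s) * Q.degree a) ^ 2
      = (Fintype.card V : ℤ) * ((s : ℤ) * Q.edgeFinset.card) ^ 2
        + 2 * ((s : ℤ) * Q.edgeFinset.card) * (1 - (s : ℤ)) * (2 * (Q.edgeFinset.card : ℤ))
        + (1 - (s : ℤ)) ^ 2 * (zagrebM1 Q : ℤ) := by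
    rw [← hM, ← hh, Finset.mul_sum, Finset.mul_sum, ← nsmul_eq_mul (Fintype.card V), ← Finset.card_univ,
      ← Finset.sum_const, ← Finset.sum_add_distrib, ← Finset.sum_add_distrib]
    exact Finset.sum_congr rfl fun a _ => by ring
  simp only [hE, hV, Finset.sum_add_distrib, Finset.sum_sub_distrib, ← Finset.mul_sum, aux_sum,
    hM, hF, ← aux_m2]
  simp only [Finset.sum_const, Finset.card_univ, Fintype.card_fin, aux_card, nsmul_eq_mul]
  ring
end
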